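/- Let $u$ be a positive smooth function on the standard $S^3$ that is radial symmetric and decreasing with respect to the north pole $N = (0,0,0,1)$ and satisfies $Pu + \varepsilon u = -s_\varepsilon u^{-7}$ for some constants $\varepsilon, s_\varepsilon > 0$, where $P = \Delta^2 + \frac{1}{2}\Delta - \frac{15}{16}$. Then $u$ is a constant function. -/

import Mathlib

open MeasureTheory Metric Set Real
open scoped RealInnerProductSpace

noncomputable section

/-- The ambient Euclidean space `ℝ⁴`. -/
abbrev E4 := EuclideanSpace ℝ (Fin 4)

/-- The standard round sphere `S³ ⊂ ℝ⁴`. -/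
def S3 : Set E4 := sphere (0 : E4) 1

/-- The standard (3-dimensional Hausdorff) measure on `S³`. -/
def muS : Measure E4 := μH[(3 : ℝ)].restrict S3

/-- Degree-zero homogeneous extension of a function on `S³` to `ℝ⁴ \ {0}`. -/
def ext0 (f : E4 → ℝ) : E4 → ℝ := fun x => f (‖x‖⁻¹ • x)

/-- The Laplace–Beltrami operator of the round `S³`, computed as the Euclidean Laplacian
of the degree-zero homogeneous extension (these agree on the sphere). -/
def sLap (f : E4 → ℝ) : E4 → ℝ := fun x =>
  ∑ i : Fin 4, fderiv ℝ (fun y => fderiv ℝ (ext0 f) y (EuclideanSpace.single i 1)) x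
    (EuclideanSpace.single i 1)

/-- The (tangential) gradient on `S³`, computed as the Euclidean gradient of the
degree-zero homogeneous extension. -/
def sGrad (f : E4 → ℝ) : E4 → E4 := fun x => gradient (ext0 f) x

/-- The Paneitz operator `P = Δ² + (1/2)Δ - 15/16` on the standard `S³`. -/
def Pan (f : E4 → ℝ) : E4 → ℝ := fun x =>
  sLap (sLap f) x + (1 / 2) * sLap f x - (15 / 16) * f x

/-- The Paneitz energy `E(φ) = ∫_{S³} [(Δφ)² - (1/2)|∇φ|² - (15/16)φ²] dμ`. -/
def Efun (f : E4 → ℝ) : ℝ :=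
  ∫ x, ((sLap f x) ^ 2 - (1 / 2) * ‖sGrad f x‖ ^ 2 - (15 / 16) * (f x) ^ 2) ∂muS

/-- Smoothness of a function on `S³` (smoothness of its homogeneous extension). -/
def SmoothS3 (f : E4 → ℝ) : Prop := ContDiffOn ℝ (⊤ : ℕ∞) (ext0 f) {0}ᶜ

/-- Membership surrogate for `H²(S³)`: the homogeneous extension is `C²` away from the
origin. -/
def H2S3 (f : E4 → ℝ) : Prop := ContDiffOn ℝ 2 (ext0 f) {0}ᶜ

/-- `‖φ⁻¹‖_{L⁶(S³)}²`. -/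
def invL6sq (f : E4 → ℝ) : ℝ := (∫ x, ((f x)⁻¹) ^ 6 ∂muS) ^ ((1 : ℝ) / 3)

/-!
Test the equation against the conformal field `X u = ⟪∇u, ∇x₄⟫ + x₄ u / 2`. By conformal covariance
of the Paneitz operator `∫ P u · X u = 0`, and since `u⁻⁷` is the critical power also
`∫ u⁻⁷ · X u = 0`. The term `ε u` leaves the Kazdan–Warner identity `∫ ⟪∇u, ∇x₄⟫ u = 0`, whose
integrand is nonnegative because `u` is monotone in `x₄`; so `u` does not depend on `x₄`.

In the latitude `α`, writing the profile of `u` as `g / cos` removes the first-order term of the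
Laplacian and turns `P` into the constant-coefficient operator `(D² + 1/4)(D² + 9/4)` on `g`.
-/

open Filter Topology

section Zonal

variable {E : Type*} [NormedAddCommGroup E] [InnerProductSpace ℝ E] {x : E}

lemma hasFDerivAt_inv_norm (hx : x ≠ 0) :
    HasFDerivAt (fun y : E => ‖y‖⁻¹) (-(‖x‖⁻¹ ^ 3) • innerSL ℝ x) x := by
  have hx' : ‖x‖ ≠ 0 := norm_ne_zero_iff.2 hx
  have hnorm := (hasStrictFDerivAt_norm_sq x).hasFDerivAt.sqrt (by positivity)
  simp only [sqrt_sq (norm_nonneg _)] at hnorm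
  refine ((hasDerivAt_inv hx').comp_hasFDerivAt x hnorm).congr_fderiv ?_
  ext v
  simp only [one_div, mul_inv_rev, neg_smul, neg_apply, smul_apply, coe_innerSL_apply, nsmul_eq_mul,
    Nat.cast_ofNat, smul_eq_mul]
  field_simp

lemma hasFDerivAt_inv_norm_mul_inner (e : E) (hx : x ≠ 0) :
    HasFDerivAt (fun y => ‖y‖⁻¹ * ⟪y, e⟫)
      (‖x‖⁻¹ • innerSL ℝ e - (‖x‖⁻¹ ^ 3 * ⟪x, e⟫) • innerSL ℝ x) x := by
  refine ((hasFDerivAt_inv_norm hx).mul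
    ((hasFDerivAt_id x).inner ℝ (hasFDerivAt_const e x))).congr_fderiv ?_
  ext v
  simp only [id_eq, neg_smul, smul_neg, add_apply, smul_apply, ContinuousLinearMap.comp_apply,
    ContinuousLinearMap.prod_apply, ContinuousLinearMap.id_apply, zero_apply, fderivInnerCLM_apply,
    inner_zero_right, real_inner_comm, zero_add, smul_eq_mul, neg_apply, coe_innerSL_apply,
    sub_apply]
  ring

variable {F : E → ℝ} {k k' : ℝ → ℝ} {k'' : ℝ} {e : E}

lemma fderiv_fderiv_apply_of_zonal (hx : ‖x‖ = 1)
    (hF : F =ᶠ[𝓝 x] fun y => k (‖y‖⁻¹ * ⟪y, e⟫))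
    (hk : ∀ᶠ t in 𝓝 ⟪x, e⟫, HasDerivAt k (k' t) t) (hk' : HasDerivAt k' k'' ⟪x, e⟫) (v : E) :
    fderiv ℝ (fun y => fderiv ℝ F y v) x v =
      k'' * (⟪e, v⟫ - ⟪x, e⟫ * ⟪x, v⟫) ^ 2 +
      k' ⟪x, e⟫ * (3 * ⟪x, e⟫ * ⟪x, v⟫ ^ 2 - 2 * (⟪x, v⟫ * ⟪v, e⟫) - ⟪x, e⟫ * ‖v‖ ^ 2) := by
  have hx0 : x ≠ 0 := norm_ne_zero_iff.1 (hx ▸ one_ne_zero)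
  have ht := hasFDerivAt_inv_norm_mul_inner e hx0
  have htx : ‖x‖⁻¹ * ⟪x, e⟫ = ⟪x, e⟫ := by simp [hx]
  have hfirst : (fun y => fderiv ℝ F y v) =ᶠ[𝓝 x] fun y =>
      k' (‖y‖⁻¹ * ⟪y, e⟫) * (‖y‖⁻¹ * ⟪e, v⟫ - ‖y‖⁻¹ ^ 3 * ⟪y, e⟫ * ⟪y, v⟫) := by
    filter_upwards [hF.eventuallyEq_nhds, eventually_ne_nhds hx0,
      ht.continuousAt.eventually (htx.symm ▸ hk)] with y hFy hy hky
    have hcomp := hky.comp_hasFDerivAt y (hasFDerivAt_inv_norm_mul_inner e hy)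
    rw [hFy.fderiv_eq]
    refine (DFunLike.congr_fun hcomp.fderiv v).trans ?_
    simp
  have hr := hasFDerivAt_inv_norm hx0
  have hinner (w : E) := (hasFDerivAt_id x).inner ℝ (hasFDerivAt_const w x)
  have hsecond := ((htx.symm ▸ hk' : HasDerivAt k' k'' (‖x‖⁻¹ * ⟪x, e⟫)).comp_hasFDerivAt x ht).mul
    ((hr.mul_const ⟪e, v⟫).sub (((hr.pow 3).mul (hinner e)).mul (hinner v)))
  rw [hfirst.fderiv_eq]
  refine (DFunLike.congr_fun hsecond.fderiv v).trans ?_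
  simp only [real_inner_comm, Function.comp_apply, hx, inv_one, one_mul, one_pow, neg_smul,
    one_smul, smul_neg, id_eq, Pi.mul_apply, Nat.add_one_sub_one, nsmul_eq_mul, Nat.cast_ofNat,
    mul_one, smul_add, Pi.sub_apply, add_apply, smul_apply, sub_apply, neg_apply, coe_innerSL_apply,
    smul_eq_mul, ContinuousLinearMap.comp_apply, ContinuousLinearMap.prod_apply,
    ContinuousLinearMap.id_apply, zero_apply, fderivInnerCLM_apply, inner_zero_right,
    real_inner_self_eq_norm_sq, zero_add]
  ring

lemma sum_fderiv_fderiv_apply_of_zonal {ι : Type*} [Fintype ι] (b : OrthonormalBasis ι ℝ E)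
    (he : ‖e‖ = 1) (hx : ‖x‖ = 1) (hF : F =ᶠ[𝓝 x] fun y => k (‖y‖⁻¹ * ⟪y, e⟫))
    (hk : ∀ᶠ t in 𝓝 ⟪x, e⟫, HasDerivAt k (k' t) t) (hk' : HasDerivAt k' k'' ⟪x, e⟫) :
    ∑ i, fderiv ℝ (fun y => fderiv ℝ F y (b i)) x (b i) =
      (1 - ⟪x, e⟫ ^ 2) * k'' - (Fintype.card ι - 1) * ⟪x, e⟫ * k' ⟪x, e⟫ := by
  have hxx : ∑ i, ⟪x, b i⟫ ^ 2 = 1 := by rw [b.sum_sq_inner_left, hx, one_pow]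
  have hee : ∑ i, ⟪e, b i⟫ ^ 2 = 1 := by rw [b.sum_sq_inner_left, he, one_pow]
  have hxe : ∑ i, ⟪x, b i⟫ * ⟪b i, e⟫ = ⟪x, e⟫ := b.sum_inner_mul_inner x e
  have hgrad : ∑ i, (⟪e, b i⟫ - ⟪x, e⟫ * ⟪x, b i⟫) ^ 2 = 1 - ⟪x, e⟫ ^ 2 := by
    have (i : ι) : (⟪e, b i⟫ - ⟪x, e⟫ * ⟪x, b i⟫) ^ 2 = ⟪e, b i⟫ ^ 2
        - 2 * ⟪x, e⟫ * (⟪x, b i⟫ * ⟪b i, e⟫) + ⟪x, e⟫ ^ 2 * ⟪x, b i⟫ ^ 2 := by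
      rw [real_inner_comm e (b i)]
      ring
    simp only [this, Finset.sum_add_distrib, Finset.sum_sub_distrib, ← Finset.mul_sum, hxx,
      hee, hxe]
    ring
  simp only [fderiv_fderiv_apply_of_zonal hx hF hk hk', b.norm_eq_one, Finset.sum_add_distrib,
    Finset.sum_sub_distrib, ← Finset.mul_sum, hgrad, hxx, hxe, one_pow, Finset.sum_const,
    Finset.card_univ, nsmul_eq_mul]
  ring

end Zonal

/-- `w` is radial on `S³` minus the poles, with value `q α` at latitude `α`. The poles are excluded
because the latitude is not smooth there. -/
def HasLatitudeProfile (w : E4 → ℝ) (q : ℝ → ℝ) : Prop :=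
  ∀ α ∈ Ioo (-(π / 2)) (π / 2), ∀ x ∈ S3, x 3 = sin α → w x = q α

lemma sin_mem_Ioo_of_mem_Ioo {α : ℝ} (hα : α ∈ Ioo (-(π / 2)) (π / 2)) :
    sin α ∈ Ioo (-1 : ℝ) 1 := by
  simpa using strictMonoOn_sin.mapsTo_Ioo hα

lemma hasDerivAt_comp_arcsin {q : ℝ → ℝ} {q' α : ℝ} (hα : α ∈ Ioo (-(π / 2)) (π / 2))
    (hq : HasDerivAt q q' α) : HasDerivAt (fun t => q (arcsin t)) (q' / cos α) (sin α) := by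
  have harcsin := arcsin_sin hα.1.le hα.2.le
  have hsin := sin_mem_Ioo_of_mem_Ioo hα
  have h := HasDerivAt.comp (sin α) (harcsin.symm ▸ hq) (hasDerivAt_arcsin hsin.1.ne' hsin.2.ne)
  rwa [← cos_arcsin, harcsin, mul_one_div] at h

namespace HasLatitudeProfile

variable {w : E4 → ℝ}

lemma ext0_eventuallyEq {q : ℝ → ℝ} (hw : HasLatitudeProfile w q) {x : E4} (hx : ‖x‖ = 1)
    (hx3 : x 3 ∈ Ioo (-1 : ℝ) 1) :
    ext0 w =ᶠ[𝓝 x] fun y => q (arcsin (‖y‖⁻¹ * ⟪y, EuclideanSpace.single 3 1⟫)) := by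
  have hx0 : x ≠ 0 := norm_ne_zero_iff.1 (hx ▸ one_ne_zero)
  have hcont := (hasFDerivAt_inv_norm_mul_inner (EuclideanSpace.single 3 1) hx0).continuousAt
  have hmem : ∀ᶠ y in 𝓝 x, ‖y‖⁻¹ * ⟪y, (EuclideanSpace.single 3 1 : E4)⟫ ∈ Ioo (-1 : ℝ) 1 :=
    hcont.eventually (isOpen_Ioo.mem_nhds (by simpa [hx, EuclideanSpace.inner_single_right]))
  filter_upwards [eventually_ne_nhds hx0, hmem] with y hy hy3
  refine hw _ ⟨neg_pi_div_two_lt_arcsin.2 hy3.1, arcsin_lt_pi_div_two.2 hy3.2⟩ _ ?_ ?_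
  · simp [S3, norm_smul, hy]
  · rw [sin_arcsin hy3.1.le hy3.2.le]
    simp [EuclideanSpace.inner_single_right]

protected lemma sLap {q q' q'' : ℝ → ℝ} (hw : HasLatitudeProfile w q)
    (hq : ∀ α ∈ Ioo (-(π / 2)) (π / 2), HasDerivAt q (q' α) α)
    (hq' : ∀ α ∈ Ioo (-(π / 2)) (π / 2), HasDerivAt q' (q'' α) α) :
    HasLatitudeProfile (sLap w) fun α => q'' α - 2 * tan α * q' α := by
  intro α hα x hx hx3
  have hcos := (cos_pos_of_mem_Ioo hα).ne'
  have hsin := sin_mem_Ioo_of_mem_Ioo hα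
  have hnorm : ‖x‖ = 1 := by simpa [S3] using hx
  have hinner : ⟪x, (EuclideanSpace.single 3 1 : E4)⟫ = sin α := by
    simpa [EuclideanSpace.inner_single_right] using hx3
  have hk : ∀ᶠ t in 𝓝 (sin α), HasDerivAt (fun t => q (arcsin t))
      (q' (arcsin t) / cos (arcsin t)) t := by
    filter_upwards [isOpen_Ioo.mem_nhds hsin] with t ht
    have hβ : arcsin t ∈ Ioo (-(π / 2)) (π / 2) :=
      ⟨neg_pi_div_two_lt_arcsin.2 ht.1, arcsin_lt_pi_div_two.2 ht.2⟩
    simpa only [sin_arcsin ht.1.le ht.2.le] using hasDerivAt_comp_arcsin hβ (hq _ hβ)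
  have hk' := hasDerivAt_comp_arcsin hα ((hq' α hα).div (hasDerivAt_cos α) hcos)
  have hlap := sum_fderiv_fderiv_apply_of_zonal (EuclideanSpace.basisFun (Fin 4) ℝ)
    (by simp) hnorm (hw.ext0_eventuallyEq hnorm (hx3 ▸ hsin)) (hinner ▸ hk) (hinner ▸ hk')
  simp only [EuclideanSpace.basisFun_apply, hinner, arcsin_sin hα.1.le hα.2.le,
    Fintype.card_fin] at hlap
  rw [sLap, hlap, ← cos_sq']
  simp only [tan_eq_sin_div_cos]
  push_cast
  field_simp
  ring

lemma sLap_div_cos {g g' g'' : ℝ → ℝ} (hw : HasLatitudeProfile w fun α => g α / cos α)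
    (hg : ∀ α, HasDerivAt g (g' α) α) (hg' : ∀ α, HasDerivAt g' (g'' α) α) :
    HasLatitudeProfile (sLap w) fun α => (g'' α + g α) / cos α := by
  have hq : ∀ α ∈ Ioo (-(π / 2)) (π / 2), HasDerivAt (fun α => g α / cos α)
      (g' α / cos α + g α * sin α / cos α ^ 2) α := fun α hα => by
    have hcos := (cos_pos_of_mem_Ioo hα).ne'
    refine ((hg α).div (hasDerivAt_cos α) hcos).congr_deriv ?_
    field_simp
    ring
  have hq' : ∀ α ∈ Ioo (-(π / 2)) (π / 2),
      HasDerivAt (fun α => g' α / cos α + g α * sin α / cos α ^ 2)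
        ((g'' α + g α) / cos α + 2 * tan α * (g' α / cos α + g α * sin α / cos α ^ 2)) α :=
    fun α hα => by
      have hcos := (cos_pos_of_mem_Ioo hα).ne'
      refine (((hg' α).div (hasDerivAt_cos α) hcos).add (((hg α).mul (hasDerivAt_sin α)).div
        ((hasDerivAt_cos α).pow 2) (pow_ne_zero 2 hcos))).congr_deriv ?_
      simp only [Pi.pow_apply, Pi.mul_apply, Nat.cast_ofNat, Nat.add_one_sub_one, pow_one,
        tan_eq_sin_div_cos]
      field_simp
      ring
  intro α hα x hx hx3
  rw [hw.sLap hq hq' α hα x hx hx3]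
  ring

end HasLatitudeProfile

lemma hasDerivAt_iteratedDeriv {g : ℝ → ℝ} {n : WithTop ℕ∞} (hg : ContDiff ℝ n g) {m : ℕ}
    (hm : m < n) (α : ℝ) : HasDerivAt (iteratedDeriv m g) (iteratedDeriv (m + 1) g α) α := by
  rw [iteratedDeriv_succ]
  exact (hg.differentiable_iteratedDeriv m hm α).hasDerivAt

lemma iteratedDeriv_eq_zero_of_reflection_eq_neg {g : ℝ → ℝ} {a : ℝ}
    (hg : ∀ α, g (2 * a - α) = -g α) {n : ℕ} (hn : Even n) : iteratedDeriv n g a = 0 := by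
  have h := congrFun (iteratedDeriv_comp_const_sub n g (2 * a)) a
  simp only [hg, iteratedDeriv_fun_neg, hn.neg_one_pow, one_smul] at h
  rw [two_mul, add_sub_cancel_left] at h
  linarith

/-- The Paneitz operator on profiles `g = cos * f`: if `w` has latitude profile `g / cos`, then
`Pan w` has latitude profile `profilePaneitz g / cos`. -/
def profilePaneitz (g : ℝ → ℝ) (α : ℝ) : ℝ :=
  iteratedDeriv 4 g α + 5 / 2 * iteratedDeriv 2 g α + 9 / 16 * g α

lemma HasLatitudeProfile.pan {w : E4 → ℝ} {g : ℝ → ℝ} (hg : ContDiff ℝ 4 g)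
    (hw : HasLatitudeProfile w fun α => g α / cos α) :
    HasLatitudeProfile (Pan w) fun α => profilePaneitz g α / cos α := by
  have h0 : ∀ α, HasDerivAt g (iteratedDeriv 1 g α) α := by
    simpa using hasDerivAt_iteratedDeriv hg (m := 0) (by norm_num)
  have h1 := hasDerivAt_iteratedDeriv hg (m := 1) (by norm_num)
  have h2 := hasDerivAt_iteratedDeriv hg (m := 2) (by norm_num)
  have h3 := hasDerivAt_iteratedDeriv hg (m := 3) (by norm_num)
  have hsLap := hw.sLap_div_cos h0 h1
  have hsLap2 := hsLap.sLap_div_cos (fun α => (h2 α).add (h0 α)) (fun α => (h3 α).add (h1 α))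
  intro α hα x hx hx3
  rw [Pan, hsLap2 α hα x hx hx3, hsLap α hα x hx hx3, hw α hα x hx hx3]
  simp only [profilePaneitz]
  ring

/-- The generator `u ↦ ⟪∇u, ∇x₄⟫ + x₄ u / 2` of the action, in the weight for which the Paneitz
operator is covariant, of the conformal dilations fixing the poles of `S³`. If `u` has latitude
profile `f = g / cos`, the image of `u` has latitude profile `conformalField g / cos`. -/
def conformalField (g : ℝ → ℝ) (α : ℝ) : ℝ :=
  cos α * deriv g α + 3 / 2 * sin α * g α

lemma continuous_conformalField {g : ℝ → ℝ} (hg : ContDiff ℝ 1 g) :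
    Continuous (conformalField g) := by
  have := hg.continuous
  have := hg.continuous_deriv_one
  unfold conformalField
  fun_prop

lemma integral_profilePaneitz_mul_conformalField {g : ℝ → ℝ} (hg : ContDiff ℝ 4 g)
    (hN : g (π / 2) = 0) (hS : g (-(π / 2)) = 0)
    (hN2 : iteratedDeriv 2 g (π / 2) = 0) (hS2 : iteratedDeriv 2 g (-(π / 2)) = 0) :
    ∫ α in (-(π / 2))..(π / 2), profilePaneitz g α * conformalField g α = 0 := by
  have hcont : Continuous fun α => profilePaneitz g α * conformalField g α := by
    have := hg.continuous
    have := hg.continuous_iteratedDeriv 2 (by norm_num)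
    have := hg.continuous_iteratedDeriv 4 le_rfl
    have := continuous_conformalField (hg.of_le (by norm_num))
    unfold profilePaneitz
    fun_prop
  have h0 : ∀ α, HasDerivAt g (iteratedDeriv 1 g α) α := by
    simpa using hasDerivAt_iteratedDeriv hg (m := 0) (by norm_num)
  have h1 := hasDerivAt_iteratedDeriv hg (m := 1) (by norm_num)
  have h2 := hasDerivAt_iteratedDeriv hg (m := 2) (by norm_num)
  have h3 := hasDerivAt_iteratedDeriv hg (m := 3) (by norm_num)
  -- The primitive comes from repeated integration by parts; each of its terms has a factor among
  -- `cos`, `g` and `iteratedDeriv 2 g`.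
  rw [intervalIntegral.integral_eq_sub_of_hasDerivAt (f := fun α =>
      conformalField g α * iteratedDeriv 3 g α - 1 / 2 * cos α * iteratedDeriv 2 g α ^ 2
        - (1 / 2 * sin α * iteratedDeriv 1 g α + 3 / 2 * cos α * g α) * iteratedDeriv 2 g α
        + 9 / 4 * (cos α * iteratedDeriv 1 g α ^ 2 + sin α * g α * iteratedDeriv 1 g α)
        - 27 / 32 * cos α * g α ^ 2) (fun α _ => ?_) (hcont.intervalIntegrable _ _)]
  · simp [conformalField, hN, hS, hN2, hS2]
  · have c := hasDerivAt_cos α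
    have s := hasDerivAt_sin α
    simp only [conformalField, profilePaneitz, ← iteratedDeriv_one]
    refine ((((((c.fun_mul (h1 α)).fun_add ((s.const_mul _).fun_mul (h0 α))).fun_mul
      (h3 α)).fun_sub ((c.const_mul _).fun_mul ((h2 α).fun_pow 2))).fun_sub
      ((((s.const_mul _).fun_mul (h1 α)).fun_add ((c.const_mul _).fun_mul (h0 α))).fun_mul
      (h2 α))).fun_add (((c.fun_mul ((h1 α).fun_pow 2)).fun_add ((s.fun_mul (h0 α)).fun_mul
      (h1 α))).const_mul _)).fun_sub ((c.const_mul _).fun_mul ((h0 α).fun_pow 2)) |>.congr_deriv ?_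
    norm_num
    ring

-- The factor `m + 7` vanishes at the critical exponent: `∫ u⁻⁶` is conformally invariant.
lemma integral_cos_mul_zpow_mul_conformalField {f : ℝ → ℝ} (hf : ContDiff ℝ 1 f)
    (hf0 : ∀ α, f α ≠ 0) (m : ℤ) :
    ∫ α in (-(π / 2))..(π / 2), cos α * f α ^ m * conformalField (fun β => cos β * f β) α =
      (m + 7) / 6 * ∫ α in (-(π / 2))..(π / 2), cos α ^ 3 * f α ^ m * deriv f α := by
  have hderiv (α : ℝ) : HasDerivAt f (deriv f α) α :=
    (hf.differentiable one_ne_zero α).hasDerivAt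
  have hprim (α : ℝ) : HasDerivAt (fun β => cos β ^ 3 * f β ^ (m + 1))
      ((m + 1) * (cos α ^ 3 * f α ^ m * deriv f α) - 3 * cos α ^ 2 * sin α * f α ^ (m + 1)) α := by
    refine (((hasDerivAt_cos α).pow 3).mul
      ((hasDerivAt_zpow (m + 1) (f α) (.inl (hf0 α))).comp α (hderiv α))).congr_deriv ?_
    simp only [Nat.cast_ofNat, Nat.add_one_sub_one, Function.comp_apply, Pi.pow_apply,
      Int.cast_add, Int.cast_one, add_sub_cancel_right]
    ring
  have hcont := hf.continuous
  have hcont' := hf.continuous_deriv_one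
  have hzpow (n : ℤ) : Continuous fun α => f α ^ n := hcont.zpow₀ n fun α => .inl (hf0 α)
  have hI : Continuous fun α => cos α ^ 3 * f α ^ m * deriv f α :=
    ((continuous_cos.pow 3).mul (hzpow m)).mul hcont'
  have hI' : Continuous fun α => (m + 1) * (cos α ^ 3 * f α ^ m * deriv f α)
      - 3 * cos α ^ 2 * sin α * f α ^ (m + 1) := by
    have := hzpow (m + 1)
    fun_prop
  have hboundary := intervalIntegral.integral_eq_sub_of_hasDerivAt (fun α _ => hprim α)
    (hI'.intervalIntegrable (-(π / 2)) (π / 2))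
  have hsplit (α : ℝ) : cos α * f α ^ m * conformalField (fun β => cos β * f β) α =
      (m + 7) / 6 * (cos α ^ 3 * f α ^ m * deriv f α) - 1 / 6 *
        ((m + 1) * (cos α ^ 3 * f α ^ m * deriv f α)
          - 3 * cos α ^ 2 * sin α * f α ^ (m + 1)) := by
    rw [conformalField, ((hasDerivAt_cos α).fun_mul (hderiv α)).deriv, zpow_add_one₀ (hf0 α)]
    ring
  simp only [hsplit]
  rw [intervalIntegral.integral_sub ((hI.const_mul _).intervalIntegrable _ _)
      ((hI'.const_mul _).intervalIntegrable _ _), intervalIntegral.integral_const_mul,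
    intervalIntegral.integral_const_mul, hboundary]
  simp

lemma integral_profilePaneitz_mul_conformalField_cos_mul {f : ℝ → ℝ} (hf : ContDiff ℝ 4 f)
    (hN : ∀ α, f (π - α) = f α) (hS : ∀ α, f (-π - α) = f α) :
    ∫ α in (-(π / 2))..(π / 2), profilePaneitz (fun β => cos β * f β) α *
      conformalField (fun β => cos β * f β) α = 0 := by
  have hgN (α : ℝ) : cos (2 * (π / 2) - α) * f (2 * (π / 2) - α) = -(cos α * f α) := by
    rw [mul_div_cancel₀ π two_ne_zero, cos_pi_sub, hN, neg_mul]
  have hgS (α : ℝ) : cos (2 * -(π / 2) - α) * f (2 * -(π / 2) - α) = -(cos α * f α) := by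
    rw [mul_neg, mul_div_cancel₀ π two_ne_zero, hS, ← neg_add', cos_neg, add_comm, cos_add_pi,
      neg_mul]
  exact integral_profilePaneitz_mul_conformalField (contDiff_cos.mul hf) (by simp) (by simp)
    (iteratedDeriv_eq_zero_of_reflection_eq_neg hgN even_two)
    (iteratedDeriv_eq_zero_of_reflection_eq_neg hgS even_two)

/-- The zonal case of the Kazdan–Warner identity `∫ ⟪∇u, ∇x₄⟫ u = 0`. -/
lemma integral_cos_pow_three_mul_mul_deriv_eq_zero {f : ℝ → ℝ} (hf : ContDiff ℝ 4 f)
    (hf0 : ∀ α, f α ≠ 0) (hN : ∀ α, f (π - α) = f α) (hS : ∀ α, f (-π - α) = f α)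
    {ε s : ℝ} (hε : ε ≠ 0)
    (heq : ∀ α ∈ Ioo (-(π / 2)) (π / 2),
      profilePaneitz (fun β => cos β * f β) α / cos α + ε * f α = -s * (f α)⁻¹ ^ 7) :
    ∫ α in (-(π / 2))..(π / 2), cos α ^ 3 * f α * deriv f α = 0 := by
  have hpan := integral_profilePaneitz_mul_conformalField_cos_mul hf hN hS
  set g : ℝ → ℝ := fun α => cos α * f α
  have hf1 : ContDiff ℝ 1 f := hf.of_le (by norm_num)
  have hX := continuous_conformalField (contDiff_cos.mul hf1)
  have hzpow (m : ℤ) : IntervalIntegrable (fun α => cos α * f α ^ m * conformalField g α)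
      volume (-(π / 2)) (π / 2) :=
    ((continuous_cos.mul (hf.continuous.zpow₀ m fun α => .inl (hf0 α))).mul hX).intervalIntegrable
      _ _
  have hcongr : ∫ α in (-(π / 2))..(π / 2), profilePaneitz g α * conformalField g α =
      ∫ α in (-(π / 2))..(π / 2), (-s * (cos α * f α ^ (-7 : ℤ) * conformalField g α)
        - ε * (cos α * f α ^ (1 : ℤ) * conformalField g α)) := by
    refine intervalIntegral.integral_congr_Ioo_of_le (by linarith [pi_pos]) fun α hα => ?_
    have hL : profilePaneitz g α = cos α * (-s * (f α)⁻¹ ^ 7 - ε * f α) := by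
      rw [← heq α hα, add_sub_cancel_right, mul_div_cancel₀ _ (cos_pos_of_mem_Ioo hα).ne']
    simp only [hL, zpow_one, zpow_neg, inv_pow]
    norm_cast
    ring
  rw [hpan, intervalIntegral.integral_sub ((hzpow _).const_mul _) ((hzpow _).const_mul _),
    intervalIntegral.integral_const_mul, intervalIntegral.integral_const_mul,
    integral_cos_mul_zpow_mul_conformalField hf1 hf0,
    integral_cos_mul_zpow_mul_conformalField hf1 hf0] at hcongr
  norm_num at hcongr
  simpa [hε] using hcongr

lemma eq_left_of_monotoneOn_of_integral_mul_deriv_eq_zero {f w : ℝ → ℝ} {a b : ℝ}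
    (hf : ContDiff ℝ 1 f) (hmono : MonotoneOn f (Icc a b)) (hw : ContinuousOn w (Icc a b))
    (hw0 : ∀ x ∈ Ioo a b, 0 < w x) (hint : ∫ x in a..b, w x * deriv f x = 0) {x : ℝ}
    (hx : x ∈ Icc a b) : f x = f a := by
  have hab : a ≤ b := hx.1.trans hx.2
  rcases hab.eq_or_lt with rfl | hab
  · rw [le_antisymm hx.2 hx.1]
  have hcont : ContinuousOn (fun y => w y * deriv f y) (Icc a b) :=
    hw.mul hf.continuous_deriv_one.continuousOn
  have hderiv (y : ℝ) (hy : y ∈ Ioo a b) : 0 ≤ deriv f y := by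
    rw [← derivWithin_of_mem_nhds (Icc_mem_nhds hy.1 hy.2)]
    exact hmono.derivWithin_nonneg
  have hnonneg : ∀ y ∈ Icc a b, 0 ≤ w y * deriv f y := by
    rw [← closure_Ioo hab.ne] at hcont ⊢
    exact le_on_closure (fun y hy => mul_nonneg (hw0 y hy).le (hderiv y hy))
      continuousOn_const hcont
  have hderiv_le (y : ℝ) (hy : y ∈ Ioo a b) : deriv f y ≤ 0 := by
    by_contra! hpos
    exact hint.not_gt (intervalIntegral.integral_pos hab hcont
      (fun z hz => hnonneg z (Ioc_subset_Icc_self hz))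
      ⟨y, Ioo_subset_Icc_self hy, mul_pos (hw0 y hy) hpos⟩)
  have hanti : AntitoneOn f (Icc a b) :=
    antitoneOn_of_deriv_nonpos (convex_Icc a b) hf.continuous.continuousOn
      (hf.differentiable one_ne_zero).differentiableOn (by rwa [interior_Icc])
  have ha := left_mem_Icc.2 hab.le
  exact le_antisymm (hanti ha hx hx.1) (hmono ha hx hx.1)

lemma eq_left_of_profilePaneitz_eq {f : ℝ → ℝ} (hf : ContDiff ℝ 4 f) (hpos : ∀ α, 0 < f α)
    (hmono : MonotoneOn f (Icc (-(π / 2)) (π / 2)))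
    (hN : ∀ α, f (π - α) = f α) (hS : ∀ α, f (-π - α) = f α) {ε s : ℝ} (hε : ε ≠ 0)
    (heq : ∀ α ∈ Ioo (-(π / 2)) (π / 2),
      profilePaneitz (fun β => cos β * f β) α / cos α + ε * f α = -s * (f α)⁻¹ ^ 7)
    {α : ℝ} (hα : α ∈ Icc (-(π / 2)) (π / 2)) : f α = f (-(π / 2)) :=
  eq_left_of_monotoneOn_of_integral_mul_deriv_eq_zero (hf.of_le (by norm_num)) hmono
    ((continuous_cos.pow 3).mul hf.continuous).continuousOn
    (fun β hβ => mul_pos (pow_pos (cos_pos_of_mem_Ioo hβ) 3) (hpos β))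
    (integral_cos_pow_three_mul_mul_deriv_eq_zero hf (fun β => (hpos β).ne') hN hS hε heq) hα

/-- The point of latitude `α` on a fixed meridian of `S³`, continued past the poles to a great
circle so that profiles are smooth on all of `ℝ`. -/
def meridian (α : ℝ) : E4 := !₂[cos α, 0, 0, sin α]

lemma meridian_mem_S3 (α : ℝ) : meridian α ∈ S3 := by
  simp [S3, meridian, EuclideanSpace.norm_eq, Fin.sum_univ_four]

lemma contDiff_meridian {n : WithTop ℕ∞} : ContDiff ℝ n meridian := by
  rw [contDiff_euclidean]
  intro i
  fin_cases i
  exacts [contDiff_cos, contDiff_const, contDiff_const, contDiff_sin]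

lemma contDiff_comp_meridian {u : E4 → ℝ} {n : WithTop ℕ∞} (hu : ContDiffOn ℝ n (ext0 u) {0}ᶜ) :
    ContDiff ℝ n fun α => u (meridian α) := by
  have hnorm (α : ℝ) : ‖meridian α‖ = 1 := by simpa [S3] using meridian_mem_S3 α
  have hcomp := hu.comp_contDiff contDiff_meridian fun α => by simp [← norm_ne_zero_iff, hnorm]
  have hext : ext0 u ∘ meridian = fun α => u (meridian α) := by
    ext α
    simp [ext0, hnorm]
  rwa [hext] at hcomp

lemma apply_mem_Icc_of_mem_S3 {x : E4} (hx : x ∈ S3) (i : Fin 4) : x i ∈ Icc (-1 : ℝ) 1 := by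
  have hnorm : ‖x‖ = 1 := by simpa [S3] using hx
  rw [mem_Icc, ← abs_le, ← norm_eq_abs, ← hnorm]
  exact PiLp.norm_apply_le x i

lemma apply_meridian {u : E4 → ℝ} {φ : ℝ → ℝ}
    (hrad : ∀ x ∈ S3, u x = φ ⟪x, (EuclideanSpace.single 3 1 : E4)⟫) (α : ℝ) :
    u (meridian α) = φ (sin α) := by
  rw [hrad _ (meridian_mem_S3 α)]
  simp [EuclideanSpace.inner_single_right, meridian]

lemma apply_eq_apply_meridian {u : E4 → ℝ} {φ : ℝ → ℝ}
    (hrad : ∀ x ∈ S3, u x = φ ⟪x, (EuclideanSpace.single 3 1 : E4)⟫) {x : E4} (hx : x ∈ S3)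
    {α : ℝ} (hx3 : x 3 = sin α) : u x = u (meridian α) := by
  rw [hrad x hx, apply_meridian hrad]
  simp [EuclideanSpace.inner_single_right, hx3]

lemma pan_meridian {u : E4 → ℝ} {φ : ℝ → ℝ} (hu : ContDiffOn ℝ 4 (ext0 u) {0}ᶜ)
    (hrad : ∀ x ∈ S3, u x = φ ⟪x, (EuclideanSpace.single 3 1 : E4)⟫) {α : ℝ}
    (hα : α ∈ Ioo (-(π / 2)) (π / 2)) :
    Pan u (meridian α) = profilePaneitz (fun β => cos β * u (meridian β)) α / cos α := by
  refine HasLatitudeProfile.pan (contDiff_cos.mul (contDiff_comp_meridian hu))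
    (fun β hβ x hx hx3 => ?_) α hα _ (meridian_mem_S3 α) (by simp [meridian])
  exact (apply_eq_apply_meridian hrad hx hx3).trans
    (mul_div_cancel_left₀ _ (cos_pos_of_mem_Ioo hβ).ne').symm

theorem stmt_18_general (u : E4 → ℝ) (hu : ContDiffOn ℝ 4 (ext0 u) {0}ᶜ)
    (hpos : ∀ x ∈ S3, 0 < u x)
    (hrad : ∃ φ : ℝ → ℝ, MonotoneOn φ (Icc (-1 : ℝ) 1) ∧
      ∀ x ∈ S3, u x = φ ⟪x, (EuclideanSpace.single 3 1 : E4)⟫)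
    (ε s : ℝ) (hε : ε ≠ 0)
    (heq : ∀ x ∈ S3, Pan u x + ε * u x = -s * ((u x)⁻¹) ^ 7) :
    ∀ x ∈ S3, ∀ y ∈ S3, u x = u y := by
  obtain ⟨φ, hφ, hrad⟩ := hrad
  have hmono : MonotoneOn (fun α => u (meridian α)) (Icc (-(π / 2)) (π / 2)) :=
    fun α hα β hβ hαβ => by
      simpa only [apply_meridian hrad] using
        hφ (sin_mem_Icc α) (sin_mem_Icc β) (strictMonoOn_sin.monotoneOn hα hβ hαβ)
  have hN (α : ℝ) : u (meridian (π - α)) = u (meridian α) := by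
    rw [apply_meridian hrad, apply_meridian hrad, sin_pi_sub]
  have hS (α : ℝ) : u (meridian (-π - α)) = u (meridian α) := by
    rw [apply_meridian hrad, apply_meridian hrad, ← neg_add', sin_neg, add_comm, sin_add_pi,
      neg_neg]
  have hode (α : ℝ) (hα : α ∈ Ioo (-(π / 2)) (π / 2)) :=
    pan_meridian hu hrad hα ▸ heq _ (meridian_mem_S3 α)
  have hconst (x : E4) (hx : x ∈ S3) : u x = u (meridian (-(π / 2))) := by
    have hx3 := apply_mem_Icc_of_mem_S3 hx 3
    rw [apply_eq_apply_meridian hrad hx (sin_arcsin hx3.1 hx3.2).symm]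
    exact eq_left_of_profilePaneitz_eq (contDiff_comp_meridian hu)
      (fun α => hpos _ (meridian_mem_S3 α)) hmono hN hS hε hode (arcsin_mem_Icc (x 3))
  intro x hx y hy
  rw [hconst x hx, hconst y hy]

/-- If `u > 0` is smooth on `S³`, radial symmetric and decreasing with respect to the
north pole `N = (0,0,0,1)`, and solves `Pu + εu = -s_ε u⁻⁷` with `ε, s_ε > 0`, then `u`
is constant. -/
theorem stmt_18 (u : E4 → ℝ) (hu : SmoothS3 u) (hpos : ∀ x ∈ S3, 0 < u x)
    (hrad : ∃ φ : ℝ → ℝ, MonotoneOn φ (Icc (-1 : ℝ) 1) ∧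
      ∀ x ∈ S3, u x = φ ⟪x, (EuclideanSpace.single 3 1 : E4)⟫)
    (ε s : ℝ) (hε : 0 < ε) (hs : 0 < s)
    (heq : ∀ x ∈ S3, Pan u x + ε * u x = -s * ((u x)⁻¹) ^ 7) :
    ∀ x ∈ S3, ∀ y ∈ S3, u x = u y :=
  stmt_18_general u (hu.of_le (WithTop.coe_le_coe.2 (le_top : (4 : ℕ∞) ≤ ⊤))) hpos hrad ε s
    hε.ne' heq
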